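/- For i ∈ {0,1} pick s_i ∈ F and set γ_i = q⁻¹(q − q⁻¹)². In U_q(affine sl₂) define B_i = e_i⁻ − γ_i e_i⁺ k_i⁻¹ + s_i k_i⁻¹ for i ∈ {0,1}. Then there exists an F-algebra homomorphism O_q → U_q(affine sl₂) that sends A ↦ B₀ and B ↦ B₁, and this homomorphism is injective. -/

import Mathlib

/-!
Existence of the homomorphism amounts to the `q`-Dolan/Grady relations for `B₀, B₁`. These are linear
in the second argument, so they split into three identities, one for each weight component of `B_j`
(`DG_f`, `DG_p`, `DG_t`), and each is a normal-ordering computation in which the only nontrivial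
commutation relation is the one between `e_i⁺` and `e_i⁻`.

For injectivity, let `N` be the algebra with two generators `x₀, x₁` and the `q`-Serre relations.
The quantum affine algebra acts on `N` as on a Verma module (`exists_rep`): `e_i⁻` is left
multiplication by `x_i`, `k_i` is a scaling, and `e_i⁺` is a difference of two skew derivations.
The Serre relations for the `e_i⁺` hold because the Serre expressions in them commute with all `e_j⁻`
and kill `1`.

Filter everything by word length. On `N` the element `B_i` acts by `x_i` plus an operator
that does not raise the degree, so an element of `O_q` with leading form `P` sends `1` to the class of
`P` plus lower terms. The associated graded algebra of `O_q` satisfies the Serre relations, hence is a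
quotient of `N`. If `a` of degree at most `n` acts by zero on `1`, then its leading form has degree less
than `n` in `N`, hence also in `O_q`, and `a` itself has degree less than `n`. Descending in `n` gives
`a = 0` (`injective_of_rep`). The argument works uniformly for all `q` with `q² ≠ 1`.
-/

noncomputable section

/-- The `q`-Serre expression `u³v − [3]_q u²vu + [3]_q uvu² − vu³`,
where `[3]_q = (q³ − q⁻³)/(q − q⁻¹)`. -/
def qSerre {F : Type*} [Field F] (q : F) {A : Type*} [Ring A] [Algebra F A] (u v : A) : A :=
  u ^ 3 * v - ((q ^ 3 - q⁻¹ ^ 3) / (q - q⁻¹)) • (u ^ 2 * v * u)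
    + ((q ^ 3 - q⁻¹ ^ 3) / (q - q⁻¹)) • (u * v * u ^ 2) - v * u ^ 3
/-- The defining relations (`q`-Dolan/Grady relations) of the `q`-Onsager algebra. -/
inductive OnsagerRel (F : Type*) [Field F] (q : F) :
    FreeAlgebra F (Fin 2) → FreeAlgebra F (Fin 2) → Prop
  | DG1 : OnsagerRel F q (qSerre q (FreeAlgebra.ι F 0) (FreeAlgebra.ι F 1))
      (((q ^ 2 - q⁻¹ ^ 2) ^ 2) •
        (FreeAlgebra.ι F 1 * FreeAlgebra.ι F 0 - FreeAlgebra.ι F 0 * FreeAlgebra.ι F 1))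
  | DG2 : OnsagerRel F q (qSerre q (FreeAlgebra.ι F 1) (FreeAlgebra.ι F 0))
      (((q ^ 2 - q⁻¹ ^ 2) ^ 2) •
        (FreeAlgebra.ι F 0 * FreeAlgebra.ι F 1 - FreeAlgebra.ι F 1 * FreeAlgebra.ι F 0))

/-- The `q`-Onsager algebra `O_q`. -/
abbrev Onsager (F : Type*) [Field F] (q : F) := RingQuot (OnsagerRel F q)

/-- The generator `A` of `O_q`. -/
def Ag (F : Type*) [Field F] (q : F) : Onsager F q :=
  RingQuot.mkAlgHom F (OnsagerRel F q) (FreeAlgebra.ι F 0)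

/-- The generator `B` of `O_q`. -/
def Bg (F : Type*) [Field F] (q : F) : Onsager F q :=
  RingQuot.mkAlgHom F (OnsagerRel F q) (FreeAlgebra.ι F 1)
/-- Generator indices for `U_q(sl₂-hat)`: `(i,0) = e_i⁺`, `(i,1) = e_i⁻`, `(i,2) = k_i`,
`(i,3) = k_i⁻¹`. -/
abbrev UqGen := (Fin 2) × (Fin 4)

/-- The free generator corresponding to the Chevalley generator `e_i⁺`. -/
def uE (F : Type*) [Field F] (i : Fin 2) : FreeAlgebra F UqGen := FreeAlgebra.ι F (i, 0)

/-- The free generator corresponding to the Chevalley generator `e_i⁻`. -/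
def uFm (F : Type*) [Field F] (i : Fin 2) : FreeAlgebra F UqGen := FreeAlgebra.ι F (i, 1)

/-- The free generator corresponding to the Chevalley generator `k_i`. -/
def uK (F : Type*) [Field F] (i : Fin 2) : FreeAlgebra F UqGen := FreeAlgebra.ι F (i, 2)

/-- The free generator corresponding to the Chevalley generator `k_i⁻¹`. -/
def uKi (F : Type*) [Field F] (i : Fin 2) : FreeAlgebra F UqGen := FreeAlgebra.ι F (i, 3)

/-- The defining relations of the quantum affine algebra `U_q(sl₂-hat)` in its
Chevalley presentation. -/
inductive UqRel (F : Type*) [Field F] (q : F) :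
    FreeAlgebra F UqGen → FreeAlgebra F UqGen → Prop
  | k_ki (i : Fin 2) : UqRel F q (uK F i * uKi F i) 1
  | ki_k (i : Fin 2) : UqRel F q (uKi F i * uK F i) 1
  | k_comm : UqRel F q (uK F 0 * uK F 1) (uK F 1 * uK F 0)
  | k_ep (i : Fin 2) : UqRel F q (uK F i * uE F i * uKi F i) ((q ^ 2) • uE F i)
  | k_em (i : Fin 2) : UqRel F q (uK F i * uFm F i * uKi F i) ((q⁻¹ ^ 2) • uFm F i)
  | k_ep' (i j : Fin 2) (h : i ≠ j) :
      UqRel F q (uK F i * uE F j * uKi F i) ((q⁻¹ ^ 2) • uE F j)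
  | k_em' (i j : Fin 2) (h : i ≠ j) :
      UqRel F q (uK F i * uFm F j * uKi F i) ((q ^ 2) • uFm F j)
  | e_comm (i : Fin 2) : UqRel F q (uE F i * uFm F i - uFm F i * uE F i)
      ((q - q⁻¹)⁻¹ • (uK F i - uKi F i))
  | ep_em : UqRel F q (uE F 0 * uFm F 1) (uFm F 1 * uE F 0)
  | em_ep : UqRel F q (uFm F 0 * uE F 1) (uE F 1 * uFm F 0)
  | serre_p (i j : Fin 2) (h : i ≠ j) : UqRel F q (qSerre q (uE F i) (uE F j)) 0
  | serre_m (i j : Fin 2) (h : i ≠ j) : UqRel F q (qSerre q (uFm F i) (uFm F j)) 0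

/-- The quantum affine algebra `U_q(sl₂-hat)`. -/
abbrev UqAff (F : Type*) [Field F] (q : F) := RingQuot (UqRel F q)

/-- The Chevalley generator `e_i⁺` of `U_q(sl₂-hat)`. -/
def eP (F : Type*) [Field F] (q : F) (i : Fin 2) : UqAff F q :=
  RingQuot.mkAlgHom F (UqRel F q) (uE F i)

/-- The Chevalley generator `e_i⁻` of `U_q(sl₂-hat)`. -/
def eM (F : Type*) [Field F] (q : F) (i : Fin 2) : UqAff F q :=
  RingQuot.mkAlgHom F (UqRel F q) (uFm F i)

/-- The Chevalley generator `k_i` of `U_q(sl₂-hat)`. -/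
def kk (F : Type*) [Field F] (q : F) (i : Fin 2) : UqAff F q :=
  RingQuot.mkAlgHom F (UqRel F q) (uK F i)

/-- The Chevalley generator `k_i⁻¹` of `U_q(sl₂-hat)`. -/
def kki (F : Type*) [Field F] (q : F) (i : Fin 2) : UqAff F q :=
  RingQuot.mkAlgHom F (UqRel F q) (uKi F i)

/-! ### Identities with the `q`-Serre expression -/

/-- `[3]_q = z + 1 + z⁻¹` for `z = q^{±2}`. In this form no denominator other than `z` appears, so
the identities below hold for every `q` with `q² ≠ 1`, roots of unity included. -/
lemma qSerre_coeff {F : Type*} [Field F] {q z : F} (hq : q ≠ 0) (hq2 : q ^ 2 ≠ 1)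
    (hz : z = q ^ 2 ∨ z = q⁻¹ ^ 2) :
    (q ^ 3 - q⁻¹ ^ 3) / (q - q⁻¹) = z + 1 + z⁻¹ := by
  have h : q ^ 2 - 1 ≠ 0 := sub_ne_zero.mpr hq2
  have h' : q - q⁻¹ ≠ 0 := by
    intro h0; apply h; field_simp at h0; linear_combination h0
  rw [div_eq_iff h']
  rcases hz with rfl | rfl <;> field_simp <;> ring

section
variable {F : Type*} [Field F] {R : Type*} [Ring R] [Algebra F R]

/-- Right-associated form of a rewriting rule `x y ↦ r`, used for normal ordering. -/
lemma mul_rule {x y r : R} (h : x * y = r) (w : R) : x * (y * w) = r * w := by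
  rw [← h, mul_assoc]

/-- First part of the `q`-Dolan/Grady relation for `u = B_i`. The relation is linear in its second
argument `B_j`, and `B_j` has three components of different weights; here the component is
`g = e_j⁻`. In the application `f = e_i⁻`, `p = -γ e_i⁺ k_i⁻¹`, `t = k_i⁻¹` and `a = q²`. Both sides
are normally ordered with `f, g` on the left, then `p`, then `t`. -/
lemma DG_f {q a s : F} {f p t g : R} (ha : a ≠ 0)
    (h3 : (q ^ 3 - q⁻¹ ^ 3) / (q - q⁻¹) = a + 1 + a⁻¹)
    (htf : t * f = a • (f * t)) (htp : t * p = a⁻¹ • (p * t))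
    (hpf : p * f = a • (f * p) - (a - 1) • (1 - t * t))
    (htg : t * g = a⁻¹ • (g * t)) (hpg : p * g = a⁻¹ • (g * p))
    (hS : qSerre q f g = 0) :
    qSerre q (f + p + s • t) g
      = ((a - a⁻¹) ^ 2) • (g * (f + p + s • t) - (f + p + s • t) * g) := by
  unfold qSerre at hS ⊢
  rw [h3] at hS ⊢
  have hS' : f * (f * (f * g)) = (a + 1 + a⁻¹) • (f * (f * (g * f)))
      - (a + 1 + a⁻¹) • (f * (g * (f * f))) + g * (f * (f * f)) := by
    rw [← sub_eq_zero, ← hS]; simp only [pow_succ, pow_zero, one_mul, mul_assoc]; abel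
  rw [← sub_eq_zero]
  simp only [pow_succ, pow_zero, one_mul, mul_one, mul_add, add_mul, mul_sub, sub_mul, mul_assoc, smul_mul_assoc,
    mul_smul_comm, htf, mul_rule htf, htp, mul_rule htp, hpf, mul_rule hpf, htg, mul_rule htg,
    hpg, mul_rule hpg, hS']
  match_scalars <;> field_simp <;> ring
/-- Second part of the `q`-Dolan/Grady relation, as in `DG_f`: the component
`g = -γ e_j⁺ k_j⁻¹` of `B_j`. -/
lemma DG_p {q a s : F} {f p t g : R} (ha : a ≠ 0)
    (h3 : (q ^ 3 - q⁻¹ ^ 3) / (q - q⁻¹) = a + 1 + a⁻¹)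
    (htf : t * f = a • (f * t)) (htp : t * p = a⁻¹ • (p * t))
    (hpf : p * f = a • (f * p) - (a - 1) • (1 - t * t))
    (htg : t * g = a • (g * t)) (hgf : g * f = a⁻¹ • (f * g))
    (hS : qSerre q p g = 0) :
    qSerre q (f + p + s • t) g
      = ((a - a⁻¹) ^ 2) • (g * (f + p + s • t) - (f + p + s • t) * g) := by
  unfold qSerre at hS ⊢
  rw [h3] at hS ⊢
  have hS' : p * (p * (p * g)) = (a + 1 + a⁻¹) • (p * (p * (g * p)))
      - (a + 1 + a⁻¹) • (p * (g * (p * p))) + g * (p * (p * p)) := by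
    rw [← sub_eq_zero, ← hS]; simp only [pow_succ, pow_zero, one_mul, mul_assoc]; abel
  rw [← sub_eq_zero]
  simp only [pow_succ, pow_zero, one_mul, mul_one, mul_add, add_mul, mul_sub, sub_mul, mul_assoc, smul_mul_assoc,
    mul_smul_comm, htf, mul_rule htf, htp, mul_rule htp, hpf, mul_rule hpf, htg, mul_rule htg,
    hgf, mul_rule hgf, hS']
  match_scalars <;> field_simp <;> ring

/-- Third part of the `q`-Dolan/Grady relation, as in `DG_f`: the component `g = k_j⁻¹`
of `B_j`. -/
lemma DG_t {q a s : F} {f p t g : R} (ha : a ≠ 0)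
    (h3 : (q ^ 3 - q⁻¹ ^ 3) / (q - q⁻¹) = a + 1 + a⁻¹)
    (htf : t * f = a • (f * t)) (htp : t * p = a⁻¹ • (p * t))
    (hpf : p * f = a • (f * p) - (a - 1) • (1 - t * t))
    (hgf : g * f = a⁻¹ • (f * g)) (hgp : g * p = a • (p * g)) (hgt : g * t = t * g) :
    qSerre q (f + p + s • t) g
      = ((a - a⁻¹) ^ 2) • (g * (f + p + s • t) - (f + p + s • t) * g) := by
  unfold qSerre
  rw [h3, ← sub_eq_zero]
  simp only [pow_succ, pow_zero, one_mul, mul_one, mul_add, add_mul, mul_sub, sub_mul, mul_assoc, smul_mul_assoc,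
    mul_smul_comm, htf, mul_rule htf, htp, mul_rule htp, hpf, mul_rule hpf, hgf, mul_rule hgf,
    hgp, mul_rule hgp, hgt, mul_rule hgt]
  match_scalars <;> field_simp <;> ring

/-- The Serre expression in `e = e_i⁺`, `g = e_j⁺` commutes with `l = e_i⁻`; only the commutation
relations with `k = k_i`, `k' = k_i⁻¹` are used, not the Serre relations. -/
lemma qSerre_comm_left {q a c : F} {e g l k k' : R} (ha : a ≠ 0)
    (h3 : (q ^ 3 - q⁻¹ ^ 3) / (q - q⁻¹) = a + 1 + a⁻¹)
    (hke : k * e = a • (e * k)) (hke' : k' * e = a⁻¹ • (e * k'))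
    (hkg : k * g = a⁻¹ • (g * k)) (hkg' : k' * g = a • (g * k'))
    (hel : e * l = l * e + c • (k - k')) (hgl : g * l = l * g) :
    qSerre q e g * l = l * qSerre q e g := by
  unfold qSerre
  rw [h3, ← sub_eq_zero]
  simp only [pow_succ, pow_zero, one_mul, mul_add, add_mul, mul_sub, sub_mul, mul_assoc, smul_mul_assoc,
    mul_smul_comm, hke, mul_rule hke, hke', mul_rule hke', hkg, mul_rule hkg, hkg', mul_rule hkg',
    hel, mul_rule hel, hgl, mul_rule hgl]
  match_scalars <;> field_simp <;> ring

/-- The Serre expression in `e = e_i⁺`, `g = e_j⁺` commutes with `l = e_j⁻`, where `k = k_j`,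
`k' = k_j⁻¹`. -/
lemma qSerre_comm_right {q a c : F} {e g l k k' : R} (ha : a ≠ 0)
    (h3 : (q ^ 3 - q⁻¹ ^ 3) / (q - q⁻¹) = a + 1 + a⁻¹)
    (hke : k * e = a⁻¹ • (e * k)) (hke' : k' * e = a • (e * k'))
    (hgl : g * l = l * g + c • (k - k')) (hel : e * l = l * e) :
    qSerre q e g * l = l * qSerre q e g := by
  unfold qSerre
  rw [h3, ← sub_eq_zero]
  simp only [pow_succ, pow_zero, one_mul, mul_add, add_mul, mul_sub, sub_mul, mul_assoc, smul_mul_assoc,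
    mul_smul_comm, hke, mul_rule hke, hke', mul_rule hke',
    hel, mul_rule hel, hgl, mul_rule hgl]
  match_scalars <;> field_simp <;> ring

lemma qSerre_add_right (q : F) (u v w : R) :
    qSerre q u (v + w) = qSerre q u v + qSerre q u w := by
  unfold qSerre
  simp only [mul_add, add_mul, smul_add]
  abel

lemma qSerre_smul_right (q c : F) (u v : R) :
    qSerre q u (c • v) = c • qSerre q u v := by
  unfold qSerre
  simp only [smul_mul_assoc, mul_smul_comm, smul_add, smul_sub, smul_comm c]

lemma map_qSerre {R' : Type*} [Ring R'] [Algebra F R'] (φ : R →ₐ[F] R') (q : F) (u v : R) :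
    φ (qSerre q u v) = qSerre q (φ u) (φ v) := by
  simp [qSerre]

/-- Triangular matrices `!![w, D w; 0, K w]` encode a skew derivation `D` along an automorphism `K`.
This lemma says that the skew derivation with `D x = 1`, `D y = 0` along `x ↦ z⁻¹ x`, `y ↦ z y`
respects the Serre relation in `x, y`. -/
lemma qSerre_skew_left {q z : F} {x y : R} (hz0 : z ≠ 0)
    (hz : (q ^ 3 - q⁻¹ ^ 3) / (q - q⁻¹) = z + 1 + z⁻¹) (h : qSerre q x y = 0) :
    qSerre q !![x, 1; 0, z⁻¹ • x] !![y, 0; 0, z • y] = 0 := by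
  have h1 : qSerre q (z⁻¹ • x) (z • y) = 0 := by
    have : qSerre q (z⁻¹ • x) (z • y) = (z⁻¹ ^ 3 * z) • qSerre q x y := by
      unfold qSerre
      simp only [pow_succ, pow_zero, one_mul, smul_mul_assoc, mul_smul_comm]
      match_scalars <;> ring
    rw [this, h, smul_zero]
  unfold qSerre at h h1 ⊢
  rw [hz] at h h1 ⊢
  ext a b
  fin_cases a <;> fin_cases b
  · simpa [pow_succ, Matrix.mul_fin_two] using h
  · simp only [pow_succ, pow_zero, one_mul, Matrix.mul_fin_two]
    simp [mul_assoc, add_mul, mul_add]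
    match_scalars <;> field_simp <;> ring
  · simp [pow_succ]
  · simp [pow_succ] at h1 ⊢
    rw [← h1]
    match_scalars <;> ring

/-- As `qSerre_skew_left`, for the skew derivation with `D x = 0`, `D y = 1` along
`x ↦ z x`, `y ↦ z⁻¹ y`. -/
lemma qSerre_skew_right {q z : F} {x y : R} (hz0 : z ≠ 0)
    (hz : (q ^ 3 - q⁻¹ ^ 3) / (q - q⁻¹) = z + 1 + z⁻¹) (h : qSerre q x y = 0) :
    qSerre q !![x, 0; 0, z • x] !![y, 1; 0, z⁻¹ • y] = 0 := by
  have h1 : qSerre q (z • x) (z⁻¹ • y) = 0 := by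
    have : qSerre q (z • x) (z⁻¹ • y) = (z ^ 3 * z⁻¹) • qSerre q x y := by
      unfold qSerre
      simp only [pow_succ, pow_zero, one_mul, smul_mul_assoc, mul_smul_comm]
      match_scalars <;> ring
    rw [this, h, smul_zero]
  unfold qSerre at h h1 ⊢
  rw [hz] at h h1 ⊢
  ext a b
  fin_cases a <;> fin_cases b
  · simpa [pow_succ, Matrix.mul_fin_two] using h
  · simp only [pow_succ, pow_zero, one_mul, Matrix.mul_fin_two]
    simp [mul_assoc]
    match_scalars
    field_simp
    ring
  · simp [pow_succ]
  · simp [pow_succ] at h1 ⊢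
    rw [← h1]
    match_scalars <;> ring
end

/-! ### The Serre algebra as a module over the quantum affine algebra -/

/-- The `q`-Serre relations on two free generators. -/
inductive SerreRel (F : Type*) [Field F] (q : F) :
    FreeAlgebra F (Fin 2) → FreeAlgebra F (Fin 2) → Prop
  | mk (i j : Fin 2) (h : i ≠ j) :
      SerreRel F q (qSerre q (FreeAlgebra.ι F i) (FreeAlgebra.ι F j)) 0

/-- The algebra presented by two generators and the `q`-Serre relations (the negative part of
the quantum affine algebra). It is a `def` so that its ring structure is found as a single named
instance. -/
def SerreAlg (F : Type*) [Field F] (q : F) := RingQuot (SerreRel F q)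

instance (F : Type*) [Field F] (q : F) : Ring (SerreAlg F q) :=
  inferInstanceAs (Ring (RingQuot (SerreRel F q)))

instance (F : Type*) [Field F] (q : F) : Algebra F (SerreAlg F q) :=
  inferInstanceAs (Algebra F (RingQuot (SerreRel F q)))

section serre
variable {F : Type*} [Field F] {q : F}

/-- A subspace stable under left multiplication by the generators is stable under left
multiplication by the subalgebra they generate. -/
lemma freeAlgebra_mul_mem {X R : Type*} [Ring R] [Algebra F R] (φ : FreeAlgebra F X →ₐ[F] R)
    (S : Submodule F R) (h : ∀ x, ∀ w ∈ S, φ (FreeAlgebra.ι F x) * w ∈ S)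
    (P : FreeAlgebra F X) : ∀ w ∈ S, φ P * w ∈ S := by
  induction P with
  | grade0 r => intro w hw; rw [AlgHom.commutes, ← Algebra.smul_def]; exact S.smul_mem r hw
  | grade1 x => exact h x
  | mul a b ha hb => intro w hw; rw [map_mul, mul_assoc]; exact ha _ (hb w hw)
  | add a b ha hb => intro w hw; rw [map_add, add_mul]; exact S.add_mem (ha w hw) (hb w hw)

/-- The projection of the free algebra onto the Serre algebra. -/
def toSerre (F : Type*) [Field F] (q : F) : FreeAlgebra F (Fin 2) →ₐ[F] SerreAlg F q :=
  RingQuot.mkAlgHom F (SerreRel F q)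

/-- The generators of the Serre algebra. -/
def xg (F : Type*) [Field F] (q : F) (i : Fin 2) : SerreAlg F q :=
  toSerre F q (FreeAlgebra.ι F i)

lemma qSerre_xg {i j : Fin 2} (h : i ≠ j) : qSerre q (xg F q i) (xg F q j) = 0 := by
  rw [xg, xg, ← map_qSerre, ← map_zero (toSerre F q)]
  exact RingQuot.mkAlgHom_rel F (SerreRel.mk i j h)

lemma toSerre_surjective : Function.Surjective (toSerre F q) :=
  RingQuot.mkAlgHom_surjective F _

/-- Induction principle for the Serre algebra: words are built from `1` by left multiplication. -/
lemma serre_mem (S : Submodule F (SerreAlg F q)) (h1 : (1 : SerreAlg F q) ∈ S)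
    (hx : ∀ j, ∀ w ∈ S, xg F q j * w ∈ S) (w : SerreAlg F q) : w ∈ S := by
  obtain ⟨P, rfl⟩ := toSerre_surjective w
  simpa using freeAlgebra_mul_mem (toSerre F q) S hx P 1 h1

/-- The scalar by which `k_i^{±1}` (for `z = q^{±2}`) rescales a left factor `e_j⁻`. -/
def sc (z : F) (i j : Fin 2) : F := if j = i then z⁻¹ else z

lemma sc_ne_zero {z : F} (hz : z ≠ 0) (i j : Fin 2) : sc z i j ≠ 0 := by
  unfold sc; split_ifs <;> simp [hz]

lemma sc_inv (z : F) (i j : Fin 2) : sc z⁻¹ i j = (sc z i j)⁻¹ := by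
  unfold sc; split_ifs <;> simp

/-- The scaling automorphism `K` of the Serre algebra, and the skew derivation `D` along it that
sends `x_i` to `1` and the other generator to `0`, characterised by their values on `x_j w`. -/
lemma exists_skew {z : F} (hz0 : z ≠ 0)
    (hz : (q ^ 3 - q⁻¹ ^ 3) / (q - q⁻¹) = z + 1 + z⁻¹) (i : Fin 2) :
    ∃ K D : Module.End F (SerreAlg F q), K 1 = 1 ∧ D 1 = 0 ∧
      (∀ j w, K (xg F q j * w) = sc z i j • (xg F q j * K w)) ∧
      (∀ j w, D (xg F q j * w) = xg F q j * D w + if j = i then K w else 0) := by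
  let g : Fin 2 → Matrix (Fin 2) (Fin 2) (SerreAlg F q) := fun j =>
    if j = i then !![xg F q j, 1; 0, z⁻¹ • xg F q j] else !![xg F q j, 0; 0, z • xg F q j]
  have hg : ∀ ⦃x y⦄, SerreRel F q x y → FreeAlgebra.lift F g x = FreeAlgebra.lift F g y := by
    rintro _ _ ⟨a, b, hab⟩
    rw [map_qSerre, map_zero, FreeAlgebra.lift_ι_apply, FreeAlgebra.lift_ι_apply]
    by_cases ha : a = i
    · have hb : b ≠ i := fun h => hab (ha.trans h.symm)
      simp only [g, ha, hb, if_true, if_false]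
      exact qSerre_skew_left hz0 hz (qSerre_xg (fun h => hb h.symm))
    · have hb : b = i := by omega
      simp only [g, ha, hb, if_true, if_false]
      exact qSerre_skew_right hz0 hz (qSerre_xg ha)
  let M : SerreAlg F q →ₐ[F] Matrix (Fin 2) (Fin 2) (SerreAlg F q) :=
    RingQuot.liftAlgHom F ⟨FreeAlgebra.lift F g, hg⟩
  have hM : ∀ j, M (xg F q j) = g j := by
    intro j
    exact (RingQuot.liftAlgHom_mkAlgHom_apply F _ _ _).trans (FreeAlgebra.lift_ι_apply _ _)
  let ent : Fin 2 → Fin 2 → Module.End F (SerreAlg F q) := fun a b =>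
    (Matrix.entryLinearMap F (SerreAlg F q) a b).comp M.toLinearMap
  have hent : ∀ a b w, ent a b w = M w a b := fun _ _ _ => rfl
  -- The diagonal entry `(0, 0)` is `w` itself, and the matrices are upper triangular.
  have h00 : ∀ w, M w 0 0 = w ∧ M w 1 0 = 0 := by
    intro w
    have := serre_mem (LinearMap.ker (ent 0 0 - 1) ⊓ LinearMap.ker (ent 1 0))
      (by simp [hent]) (by
        intro j w hw
        simp only [Submodule.mem_inf, LinearMap.mem_ker, LinearMap.sub_apply, hent, sub_eq_zero,
          Module.End.one_apply] at hw ⊢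
        rw [map_mul, hM]
        by_cases hj : j = i <;> simp [g, hj, Matrix.mul_apply, Fin.sum_univ_two, hw.1, hw.2]) w
    simpa only [Submodule.mem_inf, LinearMap.mem_ker, LinearMap.sub_apply, hent, sub_eq_zero,
          Module.End.one_apply] using this
  refine ⟨ent 1 1, ent 0 1, by simp [hent], by simp [hent], ?_, ?_⟩
  · intro j w
    rw [hent, hent, map_mul, hM]
    by_cases hj : j = i <;> simp [g, hj, sc, Matrix.mul_apply, Fin.sum_univ_two]
  · intro j w
    rw [hent, hent, hent, map_mul, hM]
    by_cases hj : j = i <;> simp [g, hj, Matrix.mul_apply, Fin.sum_univ_two]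

/-- Left multiplication by a generator. -/
def Lx (F : Type*) [Field F] (q : F) (j : Fin 2) : Module.End F (SerreAlg F q) :=
  Algebra.lmul F (SerreAlg F q) (xg F q j)

lemma Lx_apply (j : Fin 2) (w : SerreAlg F q) : Lx F q j w = xg F q j * w := rfl

/-- The module is generated by `1` under the `x_j`, so an operator that kills `1` and commutes with
left multiplications up to scalars vanishes. -/
lemma op_eq_zero (T : Module.End F (SerreAlg F q)) (h1 : T 1 = 0) (c : Fin 2 → F)
    (h : ∀ j, T * Lx F q j = c j • (Lx F q j * T)) : T = 0 := by
  ext w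
  refine serre_mem (LinearMap.ker T) h1 (fun j w hw => ?_) w
  have := LinearMap.congr_fun (h j) w
  simp only [Module.End.mul_apply, LinearMap.smul_apply, Lx_apply] at this
  rw [LinearMap.mem_ker] at hw ⊢
  rw [this, hw, mul_zero, smul_zero]

lemma K_comm {K K' : Module.End F (SerreAlg F q)} {c c' : Fin 2 → F}
    (h1 : K 1 = 1) (h1' : K' 1 = 1) (h : ∀ j, K * Lx F q j = c j • (Lx F q j * K))
    (h' : ∀ j, K' * Lx F q j = c' j • (Lx F q j * K')) : K * K' = K' * K := by
  rw [← sub_eq_zero]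
  refine op_eq_zero _ (by simp [h1, h1']) (fun j => c j * c' j) fun j => ?_
  simp only [sub_mul, mul_sub, mul_assoc, smul_mul_assoc, mul_smul_comm, h, mul_rule (R := Module.End F (SerreAlg F q)) (h j), h',
    mul_rule (R := Module.End F (SerreAlg F q)) (h' j)]
  match_scalars <;> ring

lemma K_inv {K K' : Module.End F (SerreAlg F q)} {c c' : Fin 2 → F}
    (h1 : K 1 = 1) (h1' : K' 1 = 1) (h : ∀ j, K * Lx F q j = c j • (Lx F q j * K))
    (h' : ∀ j, K' * Lx F q j = c' j • (Lx F q j * K')) (hc : ∀ j, c j * c' j = 1) :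
    K * K' = 1 := by
  rw [← sub_eq_zero]
  refine op_eq_zero _ (by simp [h1, h1']) (fun j => 1) fun j => ?_
  simp only [sub_mul, mul_sub, mul_assoc, smul_mul_assoc, mul_smul_comm, h',
    mul_rule (R := Module.End F (SerreAlg F q)) (h j), one_mul, mul_one, smul_smul]
  rw [mul_comm, hc, one_smul, one_smul]

lemma K_E {K E K₁ K₂ : Module.End F (SerreAlg F q)} {c : Fin 2 → F} {κ : F} {i : Fin 2}
    (hc : c i ≠ 0) (h1 : K 1 = 1) (hE : E 1 = 0)
    (h : ∀ j, K * Lx F q j = c j • (Lx F q j * K))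
    (hEL : ∀ j, E * Lx F q j = Lx F q j * E + if j = i then κ • (K₁ - K₂) else 0)
    (hK₁ : K * K₁ = K₁ * K) (hK₂ : K * K₂ = K₂ * K) : K * E = (c i)⁻¹ • (E * K) := by
  rw [← sub_eq_zero]
  refine op_eq_zero _ (by simp [h1, hE]) c fun j => ?_
  simp only [sub_mul, mul_sub, mul_add, add_mul, mul_assoc, smul_mul_assoc, mul_smul_comm, h,
    mul_rule (R := Module.End F (SerreAlg F q)) (h j), hEL,
    mul_rule (R := Module.End F (SerreAlg F q)) (hEL j)]
  split_ifs with hj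
  · subst hj
    simp only [mul_sub, sub_mul, smul_mul_assoc, mul_smul_comm, hK₁, hK₂]
    match_scalars <;> field_simp <;> ring
  · simp only [mul_zero, zero_mul]
    match_scalars <;> ring

/-- The Verma-type module: the quantum affine algebra acts on the Serre algebra with `e_i⁻` acting
by left multiplication, `k_i^{±1}` by scalings fixing `1`, and `e_i⁺` killing `1`. -/
lemma exists_rep (hq : q ≠ 0) (hq2 : q ^ 2 ≠ 1) :
    ∃ Ψ : UqAff F q →ₐ[F] Module.End F (SerreAlg F q), ∃ (κ : F) (c c' : Fin 2 → Fin 2 → F),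
      (∀ i, Ψ (eM F q i) = Lx F q i) ∧
      (∀ i, Ψ (kk F q i) 1 = 1) ∧ (∀ i, Ψ (kki F q i) 1 = 1) ∧ (∀ i, Ψ (eP F q i) 1 = 0) ∧
      (∀ i j, Ψ (kk F q i) * Lx F q j = c i j • (Lx F q j * Ψ (kk F q i))) ∧
      (∀ i j, Ψ (kki F q i) * Lx F q j = c' i j • (Lx F q j * Ψ (kki F q i))) ∧
      (∀ i j, Ψ (eP F q i) * Lx F q j = Lx F q j * Ψ (eP F q i) +
        if j = i then κ • (Ψ (kk F q i) - Ψ (kki F q i)) else 0) := by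
  obtain ⟨a, ha⟩ : ∃ a, a = q ^ 2 := ⟨_, rfl⟩
  have ha' : q⁻¹ ^ 2 = a⁻¹ := by rw [ha, inv_pow]
  have ha0 : a ≠ 0 := by rw [ha]; exact pow_ne_zero 2 hq
  have h3 := qSerre_coeff hq hq2 (Or.inl ha)
  have h3' : (q ^ 3 - q⁻¹ ^ 3) / (q - q⁻¹) = a⁻¹ + 1 + a⁻¹⁻¹ := by rw [h3, inv_inv]; ring
  choose K D hK1 hD1 hK hD using exists_skew ha0 h3
  choose K' D' hK1' hD1' hK' hD' using exists_skew (inv_ne_zero ha0) h3'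
  obtain ⟨κ, hκ⟩ : ∃ κ, κ = (q - q⁻¹)⁻¹ := ⟨_, rfl⟩
  let E : Fin 2 → Module.End F (SerreAlg F q) := fun i => κ • (D i - D' i)
  have hE1 : ∀ i, E i 1 = 0 := fun i => by simp [E, hD1, hD1']
  have hKL : ∀ i j, K i * Lx F q j = sc a i j • (Lx F q j * K i) := fun i j => by
    ext w; exact hK i j w
  have hKL' : ∀ i j, K' i * Lx F q j = (sc a i j)⁻¹ • (Lx F q j * K' i) := fun i j => by
    ext w; rw [← sc_inv]; exact hK' i j w
  have hEL : ∀ i j, E i * Lx F q j = Lx F q j * E i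
      + if j = i then κ • (K i - K' i) else 0 := fun i j => by
    ext w
    split_ifs with h
    · simp only [E, Module.End.mul_apply, Lx_apply, LinearMap.add_apply, LinearMap.smul_apply,
        LinearMap.sub_apply, hD, hD', if_pos h, mul_smul_comm, mul_sub]
      module
    · simp only [E, Module.End.mul_apply, Lx_apply, LinearMap.smul_apply,
        LinearMap.sub_apply, hD, hD', if_neg h, mul_smul_comm, mul_sub, add_zero]
  have hsc : ∀ i j, sc a i j ≠ 0 := sc_ne_zero ha0
  have hKK : ∀ i j, K i * K j = K j * K i := fun i j => K_comm (hK1 i) (hK1 j) (hKL i) (hKL j)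
  have hKK' : ∀ i j, K i * K' j = K' j * K i := fun i j =>
    K_comm (hK1 i) (hK1' j) (hKL i) (hKL' j)
  have hK'K' : ∀ i j, K' i * K' j = K' j * K' i := fun i j =>
    K_comm (hK1' i) (hK1' j) (hKL' i) (hKL' j)
  have hinv : ∀ i, K i * K' i = 1 := fun i =>
    K_inv (hK1 i) (hK1' i) (hKL i) (hKL' i) fun j => mul_inv_cancel₀ (hsc i j)
  have hKE : ∀ i j, K i * E j = (sc a i j)⁻¹ • (E j * K i) := fun i j =>
    K_E (hsc i j) (hK1 i) (hE1 j) (hKL i) (hEL j) (hKK i j) (hKK' i j)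
  have hKE' : ∀ i j, K' i * E j = sc a i j • (E j * K' i) := fun i j => by
    have := K_E (inv_ne_zero (hsc i j)) (hK1' i) (hE1 j) (hKL' i) (hEL j) (hKK' j i).symm
      (hK'K' i j)
    rwa [inv_inv] at this
  have scd : ∀ i, sc a i i = a⁻¹ := fun i => if_pos rfl
  have sco : ∀ i j, i ≠ j → sc a i j = a := fun i j h => if_neg h.symm
  have hELne : ∀ i j, i ≠ j → E i * Lx F q j = Lx F q j * E i := fun i j h => by
    rw [hEL, if_neg h.symm, add_zero]
  have hELeq : ∀ i, E i * Lx F q i = Lx F q i * E i + κ • (K i - K' i) := fun i => by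
    rw [hEL, if_pos rfl]
  -- `e_i⁺, e_i⁻, k_i, k_i⁻¹` act by `E i`, `Lx i`, `K i`, `K' i` respectively.
  let g : UqGen → Module.End F (SerreAlg F q) := fun x =>
    match x with
    | (i, 0) => E i
    | (i, 1) => Lx F q i
    | (i, 2) => K i
    | (i, 3) => K' i
  have gE : ∀ i, FreeAlgebra.lift F g (uE F i) = E i := fun i => by
    rw [uE, FreeAlgebra.lift_ι_apply]
  have gL : ∀ i, FreeAlgebra.lift F g (uFm F i) = Lx F q i := fun i => by
    rw [uFm, FreeAlgebra.lift_ι_apply]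
  have gK : ∀ i, FreeAlgebra.lift F g (uK F i) = K i := fun i => by
    rw [uK, FreeAlgebra.lift_ι_apply]
  have gK' : ∀ i, FreeAlgebra.lift F g (uKi F i) = K' i := fun i => by
    rw [uKi, FreeAlgebra.lift_ι_apply]
  have hg : ∀ ⦃x y⦄, UqRel F q x y → FreeAlgebra.lift F g x = FreeAlgebra.lift F g y := by
    intro x y hxy
    cases hxy with
    | k_ki i => simp only [map_mul, map_one, gK, gK', hinv]
    | ki_k i => simp only [map_mul, map_one, gK, gK', ← hKK', hinv]
    | k_comm => simp only [map_mul, gK]; exact hKK 0 1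
    | k_ep i =>
      rw [map_mul, map_mul, map_smul, gK, gK', gE, hKE, smul_mul_assoc, mul_assoc, hinv,
        mul_one, scd, inv_inv, ha]
    | k_em i =>
      rw [map_mul, map_mul, map_smul, gK, gK', gL, hKL, smul_mul_assoc, mul_assoc, hinv,
        mul_one, scd, ha']
    | k_ep' i j h =>
      rw [map_mul, map_mul, map_smul, gK, gK', gE, hKE, smul_mul_assoc, mul_assoc, hinv,
        mul_one, sco i j h, ha']
    | k_em' i j h =>
      rw [map_mul, map_mul, map_smul, gK, gK', gL, hKL, smul_mul_assoc, mul_assoc, hinv,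
        mul_one, sco i j h, ha]
    | e_comm i =>
      simp only [map_sub, map_mul, map_smul, gK, gK', gL, gE, hELeq, hκ]
      abel
    | ep_em => simp only [map_mul, gL, gE]; exact hELne 0 1 (by decide)
    | em_ep => simp only [map_mul, gL, gE]; exact (hELne 1 0 (by decide)).symm
    | serre_p i j h =>
      rw [map_qSerre, map_zero, gE, gE]
      -- The Serre expression in the `e⁺` commutes with all `e⁻` and kills the generating vector.
      refine op_eq_zero _ ?_ (fun _ => 1) fun l => ?_
      · simp [qSerre, pow_succ, hE1]
      · rw [one_smul]
        by_cases hl : l = i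
        · subst hl
          exact qSerre_comm_left ha0 h3 (by rw [hKE, scd, inv_inv]) (by rw [hKE', scd])
            (by rw [hKE, sco l j h]) (by rw [hKE', sco l j h]) (hELeq l) (hELne j l h.symm)
        · obtain rfl : l = j := by omega
          exact qSerre_comm_right ha0 h3 (by rw [hKE, sco l i hl]) (by rw [hKE', sco l i hl])
            (hELeq l) (hELne i l h)
    | serre_m i j h =>
      rw [map_qSerre, map_zero, gL, gL, Lx, Lx, ← map_qSerre, qSerre_xg h, map_zero]
  let Ψ : UqAff F q →ₐ[F] Module.End F (SerreAlg F q) :=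
    RingQuot.liftAlgHom F ⟨FreeAlgebra.lift F g, hg⟩
  have hΨ : ∀ x, Ψ (RingQuot.mkAlgHom F (UqRel F q) x) = FreeAlgebra.lift F g x := fun x => by
    simp [Ψ]
  refine ⟨Ψ, κ, sc a, fun i j => (sc a i j)⁻¹, ?_⟩
  simp only [eM, kk, kki, eP, hΨ, gE, gL, gK, gK']
  exact ⟨fun _ => trivial, hK1, hK1', hE1, hKL, hKL', hEL⟩
end serre

/-! ### Word-length filtrations and leading terms -/

section filtration
variable {F : Type*} [Field F]

/-- The filtration `⊥ ⊆ V⁰ ⊆ V¹ ⊆ ⋯` shifted by one: `low V n` is the part of degree strictly less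
than `n`. -/
def low {R : Type*} [Ring R] [Algebra F R] (V : Submodule F R) : ℕ → Submodule F R
  | 0 => ⊥
  | n + 1 => V ^ n

/-- The span of `1` and the generators `y`: elements of degree at most one. -/
def VV (F : Type*) [Field F] {R : Type*} [Ring R] [Algebra F R] (y : Fin 2 → R) :
    Submodule F R := Submodule.span F (insert 1 (Set.range y))

/-- The span of the generators `y`. In the free algebra its `n`-th power is the homogeneous
component of degree `n`. -/
def XX (F : Type*) [Field F] {R : Type*} [Ring R] [Algebra F R] (y : Fin 2 → R) :
    Submodule F R := Submodule.span F (Set.range y)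

variable {R : Type*} [Ring R] [Algebra F R] {y : Fin 2 → R}

lemma one_mem_VV : (1 : R) ∈ VV F y := Submodule.subset_span (Set.mem_insert _ _)

lemma gen_mem_VV (j : Fin 2) : y j ∈ VV F y :=
  Submodule.subset_span (Set.mem_insert_of_mem _ ⟨j, rfl⟩)

lemma VV_mul_le {W S : Submodule F R} (h1 : W ≤ S) (hy : ∀ j, ∀ w ∈ W, y j * w ∈ S) :
    VV F y * W ≤ S := by
  rw [Submodule.mul_le]
  intro v hv w hw
  induction hv using Submodule.span_induction with
  | mem x hx =>
    rcases hx with rfl | ⟨j, rfl⟩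
    · rw [one_mul]; exact h1 hw
    · exact hy j w hw
  | zero => rw [zero_mul]; exact S.zero_mem
  | add a b _ _ ha hb => rw [add_mul]; exact S.add_mem ha hb
  | smul c a _ ha => rw [smul_mul_assoc]; exact S.smul_mem c ha

lemma XX_mul_le {W S : Submodule F R} (hy : ∀ j, ∀ w ∈ W, y j * w ∈ S) :
    XX F y * W ≤ S := by
  rw [Submodule.mul_le]
  intro v hv w hw
  induction hv using Submodule.span_induction with
  | mem x hx =>
    obtain ⟨j, rfl⟩ := hx
    exact hy j w hw
  | zero => rw [zero_mul]; exact S.zero_mem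
  | add a b _ _ ha hb => rw [add_mul]; exact S.add_mem ha hb
  | smul c a _ ha => rw [smul_mul_assoc]; exact S.smul_mem c ha

lemma VV_pow_mono : Monotone fun n => VV F y ^ n := by
  refine monotone_nat_of_le_succ fun n => ?_
  intro w hw
  rw [pow_succ, ← mul_one w]
  exact Submodule.mul_mem_mul hw one_mem_VV

lemma mul_low_le (V : Submodule F R) (i j : ℕ) : V ^ i * low V j ≤ low V (i + j) := by
  cases j with
  | zero => simp [low]
  | succ j => rw [← add_assoc]; exact (pow_add V i j).ge

lemma low_mul_le (V : Submodule F R) (i j : ℕ) : low V i * V ^ j ≤ low V (i + j) := by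
  cases i with
  | zero => simp [low]
  | succ i => rw [Nat.succ_add]; exact (pow_add V i j).ge

lemma gen_mul_low {n : ℕ} {w : R} (j : Fin 2) (hw : w ∈ low (VV F y) n) :
    y j * w ∈ low (VV F y) (n + 1) := by
  have := mul_low_le (VV F y) 1 n (Submodule.mul_mem_mul
    (by rw [pow_one]; exact gen_mem_VV j) hw)
  rwa [add_comm] at this

lemma low_le_pow (n : ℕ) : low (VV F y) n ≤ VV F y ^ n := by
  cases n with
  | zero => exact bot_le
  | succ n => exact VV_pow_mono n.le_succ

lemma map_VV {R' : Type*} [Ring R'] [Algebra F R'] (φ : R →ₐ[F] R') :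
    (VV F y).map φ.toLinearMap = VV F (φ ∘ y) := by
  rw [VV, VV, Submodule.map_span, Set.image_insert_eq, ← Set.range_comp]
  simp

lemma map_low {R' : Type*} [Ring R'] [Algebra F R'] (φ : R →ₐ[F] R') (n : ℕ) :
    (low (VV F y) n).map φ.toLinearMap = low (VV F (φ ∘ y)) n := by
  cases n with
  | zero => simp [low]
  | succ n => simp only [low]; rw [Submodule.map_pow, map_VV]

/-- An operator commuting with the generators up to scalars and filtration-preserving operators
preserves the filtration. -/
lemma pres_of_comm {y : Fin 2 → R} {T : Module.End F R} (H : Fin 2 → Module.End F R)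
    (c : Fin 2 → F) (h1 : T 1 ∈ VV F y ^ 0)
    (hH : ∀ j n, ∀ w ∈ VV F y ^ n, H j w ∈ VV F y ^ n)
    (h : ∀ j w, T (y j * w) = c j • (y j * T w) + H j w) :
    ∀ n, ∀ w ∈ VV F y ^ n, T w ∈ VV F y ^ n := by
  intro n
  induction n with
  | zero =>
    intro w hw
    rw [pow_zero, Submodule.mem_one] at hw
    obtain ⟨r, rfl⟩ := hw
    rw [Algebra.algebraMap_eq_smul_one, map_smul]
    exact Submodule.smul_mem _ _ h1
  | succ n ih =>
    have : VV F y ^ (n + 1) ≤ (VV F y ^ (n + 1)).comap T := by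
      conv_lhs => rw [pow_succ']
      refine VV_mul_le (fun w hw => VV_pow_mono n.le_succ (ih w hw)) fun j w hw => ?_
      rw [Submodule.mem_comap, h]
      refine Submodule.add_mem _ (Submodule.smul_mem _ _ ?_)
        (VV_pow_mono n.le_succ (hH j n w hw))
      rw [pow_succ']
      exact Submodule.mul_mem_mul (gen_mem_VV j) (ih w hw)
    exact this

/-- The generators of the free algebra. -/
abbrev fg (F : Type*) [Field F] : Fin 2 → FreeAlgebra F (Fin 2) := FreeAlgebra.ι F

lemma VV_exhaust (ρ : FreeAlgebra F (Fin 2) →ₐ[F] R) (P : FreeAlgebra F (Fin 2)) :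
    ∃ n, ρ P ∈ VV F (ρ ∘ fg F) ^ n := by
  induction P with
  | grade0 r =>
    refine ⟨0, ?_⟩
    rw [AlgHom.commutes, pow_zero]; exact Submodule.algebraMap_mem r
  | grade1 x => exact ⟨1, by rw [pow_one]; exact gen_mem_VV (y := ρ ∘ fg F) x⟩
  | mul a b ha hb =>
    obtain ⟨m, hm⟩ := ha
    obtain ⟨n, hn⟩ := hb
    exact ⟨m + n, by rw [map_mul, pow_add]; exact Submodule.mul_mem_mul hm hn⟩
  | add a b ha hb =>
    obtain ⟨m, hm⟩ := ha
    obtain ⟨n, hn⟩ := hb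
    exact ⟨max m n, by
      rw [map_add]
      exact Submodule.add_mem _ (VV_pow_mono (le_max_left m n) hm)
        (VV_pow_mono (le_max_right m n) hn)⟩

/-- Every element of degree at most `n` is the image of a homogeneous element of degree `n` of the
free algebra, up to terms of lower degree. -/
lemma pow_le_lead (ρ : FreeAlgebra F (Fin 2) →ₐ[F] R) (n : ℕ) :
    VV F (ρ ∘ fg F) ^ n ≤ (XX F (fg F) ^ n).map ρ.toLinearMap ⊔ low (VV F (ρ ∘ fg F)) n := by
  induction n with
  | zero =>
    rw [Submodule.map_pow, pow_zero, pow_zero]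
    exact le_sup_left
  | succ n ih =>
    rw [pow_succ']
    refine VV_mul_le le_sup_right fun j w hw => ?_
    obtain ⟨_, ⟨P, hP, rfl⟩, l, hl, rfl⟩ := Submodule.mem_sup.mp (ih hw)
    rw [mul_add]
    refine Submodule.add_mem_sup ⟨fg F j * P, ?_, by simp⟩ (gen_mul_low j hl)
    rw [pow_succ']
    exact Submodule.mul_mem_mul (Submodule.subset_span ⟨j, rfl⟩) hP

open Polynomial in
/-- The homomorphism to the polynomial ring with `x_j ↦ ρ(x_j) T`. The coefficient of `T^m` in
`homog ρ P` is the image under `ρ` of the component of degree `m` of `P`. -/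
def homog (ρ : FreeAlgebra F (Fin 2) →ₐ[F] R) : FreeAlgebra F (Fin 2) →ₐ[F] R[X] :=
  FreeAlgebra.lift F fun j => Polynomial.monomial 1 (ρ (fg F j))

lemma homog_gen (ρ : FreeAlgebra F (Fin 2) →ₐ[F] R) (j : Fin 2) :
    homog ρ (fg F j) = Polynomial.monomial 1 (ρ (fg F j)) := by
  rw [homog, fg, FreeAlgebra.lift_ι_apply]

lemma homog_of_mem (ρ : FreeAlgebra F (Fin 2) →ₐ[F] R) (n : ℕ) :
    ∀ P ∈ XX F (fg F) ^ n, homog ρ P = Polynomial.monomial n (ρ P) := by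
  induction n with
  | zero =>
    intro P hP
    rw [pow_zero, Submodule.mem_one] at hP
    obtain ⟨r, rfl⟩ := hP
    rw [AlgHom.commutes, AlgHom.commutes]; rfl
  | succ n ih =>
    have : XX F (fg F) ^ (n + 1) ≤ LinearMap.eqLocus (homog ρ).toLinearMap
        ((Polynomial.monomial (n + 1)).restrictScalars F ∘ₗ ρ.toLinearMap) := by
      rw [pow_succ']
      refine XX_mul_le fun j w hw => ?_
      simp only [LinearMap.mem_eqLocus, AlgHom.toLinearMap_apply, LinearMap.comp_apply,
        LinearMap.restrictScalars_apply, map_mul]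
      rw [homog_gen, ih w hw, Polynomial.monomial_mul_monomial, add_comm]
    exact this

lemma homog_coeff_eq_zero (ρ : FreeAlgebra F (Fin 2) →ₐ[F] R) (n : ℕ) :
    ∀ P ∈ VV F (fg F) ^ n, ∀ m, n < m → (homog ρ P).coeff m = 0 := by
  induction n with
  | zero =>
    intro P hP m hm
    rw [pow_zero, Submodule.mem_one] at hP
    obtain ⟨r, rfl⟩ := hP
    rw [AlgHom.commutes, Polynomial.algebraMap_apply, Polynomial.coeff_C, if_neg hm.ne']
  | succ n ih =>
    intro P hP m hm
    have : VV F (fg F) ^ (n + 1) ≤ LinearMap.ker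
        ((Polynomial.lcoeff R m).restrictScalars F ∘ₗ (homog ρ).toLinearMap) := by
      rw [pow_succ']
      refine VV_mul_le (fun w hw => ih w hw m (by omega)) fun j w hw => ?_
      simp only [LinearMap.mem_ker, AlgHom.toLinearMap_apply, LinearMap.comp_apply,
        LinearMap.restrictScalars_apply, map_mul, Polynomial.lcoeff_apply]
      obtain ⟨m, rfl⟩ : ∃ m', m = m' + 1 := ⟨m - 1, by omega⟩
      rw [homog_gen, Polynomial.coeff_monomial_mul, ih w hw m (by omega), mul_zero]
    exact this hP

lemma homog_coeff_mem (ρ : FreeAlgebra F (Fin 2) →ₐ[F] R) (P : FreeAlgebra F (Fin 2)) :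
    ∀ m, (homog ρ P).coeff m ∈ VV F (ρ ∘ fg F) ^ m := by
  induction P with
  | grade0 r =>
    intro m
    rw [AlgHom.commutes, Polynomial.algebraMap_apply, Polynomial.coeff_C]
    split_ifs with h
    · rw [h, pow_zero]; exact Submodule.algebraMap_mem r
    · exact Submodule.zero_mem _
  | grade1 x =>
    intro m
    rw [homog_gen, Polynomial.coeff_monomial]
    split_ifs with h
    · rw [← h, pow_one]; exact gen_mem_VV (y := ρ ∘ fg F) x
    · exact Submodule.zero_mem _
  | mul a b ha hb =>
    intro m
    rw [map_mul, Polynomial.coeff_mul]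
    refine Submodule.sum_mem _ fun x hx => ?_
    rw [← Finset.HasAntidiagonal.mem_antidiagonal.mp hx, pow_add]
    exact Submodule.mul_mem_mul (ha _) (hb _)
  | add a b ha hb =>
    intro m
    rw [map_add, Polynomial.coeff_add]
    exact Submodule.add_mem _ (ha m) (hb m)

/-- The congruence on the free algebra whose quotient is a model of the associated graded algebra of
`R`: two elements are related when their components of each degree `m` agree in `R` up to terms of
degree less than `m`. -/
def leadCon (ρ : FreeAlgebra F (Fin 2) →ₐ[F] R) : RingCon (FreeAlgebra F (Fin 2)) where
  r P Q := ∀ m, (homog ρ (P - Q)).coeff m ∈ low (VV F (ρ ∘ fg F)) m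
  iseqv :=
    { refl := fun P m => by simp
      symm := fun {P Q} h m => by
        rw [← neg_sub, map_neg, Polynomial.coeff_neg]; exact Submodule.neg_mem _ (h m)
      trans := fun {P Q S} h h' m => by
        rw [← sub_add_sub_cancel P Q S, map_add, Polynomial.coeff_add]
        exact Submodule.add_mem _ (h m) (h' m) }
  add' := fun {P P' Q Q'} h h' m => by
    rw [add_sub_add_comm, map_add, Polynomial.coeff_add]
    exact Submodule.add_mem _ (h m) (h' m)
  mul' := fun {P P' Q Q'} h h' m => by
    have e : P * Q - P' * Q' = P * (Q - Q') + (P - P') * Q' := by noncomm_ring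
    rw [e, map_add, map_mul, map_mul, Polynomial.coeff_add, Polynomial.coeff_mul,
      Polynomial.coeff_mul]
    refine Submodule.add_mem _ (Submodule.sum_mem _ fun x hx => ?_)
      (Submodule.sum_mem _ fun x hx => ?_)
    · rw [← Finset.HasAntidiagonal.mem_antidiagonal.mp hx]
      exact mul_low_le _ _ _ (Submodule.mul_mem_mul (homog_coeff_mem ρ P _) (h' _))
    · rw [← Finset.HasAntidiagonal.mem_antidiagonal.mp hx]
      exact low_mul_le _ _ _ (Submodule.mul_mem_mul (h _) (homog_coeff_mem ρ Q' _))

lemma qSerre_monomial (q : F) (u v : R) :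
    qSerre q (Polynomial.monomial 1 u) (Polynomial.monomial 1 v)
      = Polynomial.monomial 4 (qSerre q u v) := by
  unfold qSerre
  simp only [pow_succ, pow_zero, one_mul, Polynomial.monomial_mul_monomial, map_add, map_sub,
    Polynomial.smul_monomial]

/-- If the Serre expressions in `R` have degree at most three, the associated graded algebra of `R`
satisfies the Serre relations, hence is a quotient of the Serre algebra. -/
lemma leadCon_of_toSerre {q : F} (ρ : FreeAlgebra F (Fin 2) →ₐ[F] R)
    (hρ : ∀ i j, i ≠ j → qSerre q (ρ (fg F i)) (ρ (fg F j)) ∈ VV F (ρ ∘ fg F) ^ 3)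
    {P Q : FreeAlgebra F (Fin 2)} (h : toSerre F q P = toSerre F q Q) : leadCon ρ P Q := by
  have hg : ∀ ⦃x y⦄, SerreRel F q x y → (leadCon ρ).mk' x = (leadCon ρ).mk' y := by
    rintro _ _ ⟨i, j, hij⟩
    refine (RingCon.eq _).mpr fun m => ?_
    have : homog ρ (qSerre q (FreeAlgebra.ι F i) (FreeAlgebra.ι F j))
        = Polynomial.monomial 4 (qSerre q (ρ (fg F i)) (ρ (fg F j))) := by
      rw [← qSerre_monomial, ← homog_gen, ← homog_gen]
      exact map_qSerre (homog ρ) q _ _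
    rw [sub_zero, this, Polynomial.coeff_monomial]
    split_ifs with hm
    · rw [← hm]; exact hρ i j hij
    · exact Submodule.zero_mem _
  have key : ∀ P, RingQuot.lift ⟨(leadCon ρ).mk', hg⟩ (toSerre F q P) = (leadCon ρ).mk' P := by
    intro P
    rw [toSerre]
    have : RingQuot.mkAlgHom F (SerreRel F q) P = RingQuot.mkRingHom (SerreRel F q) P := by
      rw [← RingQuot.mkAlgHom_coe F]; rfl
    exact (congrArg _ this).trans (RingQuot.lift_mkRingHom_apply _ _ _)
  refine (RingCon.eq _).mp ?_
  have := congrArg (RingQuot.lift ⟨(leadCon ρ).mk', hg⟩) h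
  rwa [key, key] at this

/-- If the leading form `P` of degree `n` agrees in the Serre algebra with an element of lower
degree, then its image in `R` has lower degree too. -/
lemma lead_mem_low {q : F} (ρ : FreeAlgebra F (Fin 2) →ₐ[F] R)
    (hρ : ∀ i j, i ≠ j → qSerre q (ρ (fg F i)) (ρ (fg F j)) ∈ VV F (ρ ∘ fg F) ^ 3)
    {n : ℕ} {P : FreeAlgebra F (Fin 2)} (hP : P ∈ XX F (fg F) ^ n)
    (h : toSerre F q P ∈ low (VV F (xg F q)) n) : ρ P ∈ low (VV F (ρ ∘ fg F)) n := by
  have e : xg F q = toSerre F q ∘ fg F := rfl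
  rw [e, ← map_low] at h
  obtain ⟨Q, hQ, hPQ⟩ := h
  have := leadCon_of_toSerre (q := q) ρ hρ (P := P) (Q := Q) hPQ.symm n
  have hQ0 : (homog ρ Q).coeff n = 0 := by
    cases n with
    | zero => rw [(Submodule.mem_bot F).mp hQ]; simp
    | succ n => exact homog_coeff_eq_zero ρ n Q hQ _ n.lt_succ_self
  rwa [map_sub, Polynomial.coeff_sub, hQ0, sub_zero, homog_of_mem ρ n P hP,
    Polynomial.coeff_monomial, if_pos rfl] at this

/-- Let `R` be a filtered algebra with two generators whose Serre expressions have degree at most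
three, acting on the Serre algebra so that each generator acts by `x_j` plus an operator that
preserves the filtration. Then an element of `R` killing `1` is zero. -/
lemma injective_of_rep {q : F} (ρ : FreeAlgebra F (Fin 2) →ₐ[F] R)
    (hsurj : Function.Surjective ρ)
    (hρ : ∀ i j, i ≠ j → qSerre q (ρ (fg F i)) (ρ (fg F j)) ∈ VV F (ρ ∘ fg F) ^ 3)
    (Θ : R →ₐ[F] Module.End F (SerreAlg F q)) (G : Fin 2 → Module.End F (SerreAlg F q))
    (hΘ : ∀ j, Θ (ρ (fg F j)) = Lx F q j + G j)
    (hG : ∀ j n, ∀ w ∈ VV F (xg F q) ^ n, G j w ∈ VV F (xg F q) ^ n)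
    (a : R) (ha : Θ a 1 = 0) : a = 0 := by
  have hΘj : ∀ j b, Θ (ρ (fg F j) * b) 1 = xg F q j * Θ b 1 + G j (Θ b 1) := fun j b => by
    rw [map_mul, hΘ]; rfl
  have hG' : ∀ j n, ∀ w ∈ low (VV F (xg F q)) n, G j w ∈ low (VV F (xg F q)) n := by
    intro j n w hw
    cases n with
    | zero => rw [(Submodule.mem_bot F).mp hw, map_zero]; exact Submodule.zero_mem _
    | succ n => exact hG j n w hw
  have hpow : ∀ n, ∀ b ∈ VV F (ρ ∘ fg F) ^ n, Θ b 1 ∈ VV F (xg F q) ^ n := by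
    intro n
    induction n with
    | zero =>
      intro b hb
      rw [pow_zero, Submodule.mem_one] at hb
      obtain ⟨r, rfl⟩ := hb
      rw [AlgHom.commutes, pow_zero, Algebra.algebraMap_eq_smul_one]
      exact Submodule.smul_mem _ r (Submodule.one_le.mp le_rfl)
    | succ n ih =>
      let ev : R →ₗ[F] SerreAlg F q := LinearMap.applyₗ (1 : SerreAlg F q) ∘ₗ Θ.toLinearMap
      have : VV F (ρ ∘ fg F) ^ (n + 1) ≤ (VV F (xg F q) ^ (n + 1)).comap ev := by
        conv_lhs => rw [pow_succ']
        refine VV_mul_le (fun w hw => VV_pow_mono n.le_succ (ih w hw)) fun j w hw => ?_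
        change Θ (ρ (fg F j) * w) 1 ∈ VV F (xg F q) ^ (n + 1)
        rw [hΘj]
        refine Submodule.add_mem _ ?_ (VV_pow_mono n.le_succ (hG j n _ (ih w hw)))
        rw [pow_succ']
        exact Submodule.mul_mem_mul (gen_mem_VV j) (ih w hw)
      exact this
  have hlow : ∀ n, ∀ b ∈ low (VV F (ρ ∘ fg F)) n, Θ b 1 ∈ low (VV F (xg F q)) n := by
    intro n b hb
    cases n with
    | zero =>
      rw [(Submodule.mem_bot F).mp hb, map_zero]; exact Submodule.zero_mem _
    | succ n => exact hpow n b hb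
  have hlead : ∀ n, ∀ P ∈ XX F (fg F) ^ n,
      Θ (ρ P) 1 - toSerre F q P ∈ low (VV F (xg F q)) n := by
    intro n
    induction n with
    | zero =>
      intro P hP
      rw [pow_zero, Submodule.mem_one] at hP
      obtain ⟨r, rfl⟩ := hP
      rw [AlgHom.commutes, AlgHom.commutes, AlgHom.commutes, Algebra.algebraMap_eq_smul_one,
        Algebra.algebraMap_eq_smul_one, LinearMap.smul_apply, Module.End.one_apply, sub_self]
      exact Submodule.zero_mem _
    | succ n ih =>
      let ev : FreeAlgebra F (Fin 2) →ₗ[F] SerreAlg F q :=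
        LinearMap.applyₗ (1 : SerreAlg F q) ∘ₗ Θ.toLinearMap ∘ₗ ρ.toLinearMap
          - (toSerre F q).toLinearMap
      have : XX F (fg F) ^ (n + 1) ≤ (low (VV F (xg F q)) (n + 1)).comap ev := by
        conv_lhs => rw [pow_succ']
        refine XX_mul_le fun j w hw => ?_
        change Θ (ρ (fg F j * w)) 1 - toSerre F q (fg F j * w) ∈ low (VV F (xg F q)) (n + 1)
        have hw' := ih w hw
        have e : Θ (ρ (fg F j * w)) 1 - toSerre F q (fg F j * w)
            = xg F q j * (Θ (ρ w) 1 - toSerre F q w) + G j (Θ (ρ w) 1) := by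
          rw [map_mul, hΘj, map_mul, mul_sub, xg]; abel
        rw [e]
        refine Submodule.add_mem _ (gen_mul_low j hw') (hG j n _ ?_)
        refine hpow n _ ?_
        have : ρ w ∈ (XX F (fg F) ^ n).map ρ.toLinearMap := ⟨w, hw, rfl⟩
        have hXV : XX F (fg F) ≤ VV F (fg F) := Submodule.span_mono (Set.subset_insert _ _)
        have h2 := Submodule.map_mono (f := ρ.toLinearMap) (pow_le_pow_left' hXV n) this
        rwa [Submodule.map_pow, map_VV] at h2
      exact this
  -- Descent on the degree: if `b` kills `1`, its leading form has lower degree in the Serre algebra,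
  -- so `b` itself has lower degree.
  have main : ∀ n, ∀ b ∈ low (VV F (ρ ∘ fg F)) n, Θ b 1 = 0 → b = 0 := by
    intro n
    induction n with
    | zero => intro b hb _; exact (Submodule.mem_bot F).mp hb
    | succ n ih =>
      intro b hb hb0
      obtain ⟨_, ⟨P, hP, rfl⟩, l, hl, rfl⟩ := Submodule.mem_sup.mp (pow_le_lead ρ n hb)
      refine ih _ (Submodule.add_mem _ (lead_mem_low (q := q) ρ hρ hP ?_) hl) hb0
      have e : toSerre F q P = -(Θ (ρ P) 1 - toSerre F q P) - Θ l 1 := by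
        rw [map_add, LinearMap.add_apply] at hb0
        rw [← sub_eq_zero, ← hb0]
        simp only [AlgHom.toLinearMap_apply]
        abel
      rw [e]
      exact Submodule.sub_mem _ (Submodule.neg_mem _ (hlead n P hP)) (hlow n l hl)
  obtain ⟨P, rfl⟩ := hsurj a
  obtain ⟨n, hn⟩ := VV_exhaust ρ P
  exact main (n + 1) _ hn ha
end filtration

/-! ### The relations for the generators, and the embedding -/

section embedding
variable {F : Type*} [Field F]

lemma inv_mul_of_conj {R : Type*} [Ring R] [Algebra F R] {k k' x : R} {c : F} (hc : c ≠ 0)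
    (h' : k' * k = 1) (h : k * x * k' = c • x) : k' * x = c⁻¹ • (x * k') := by
  have : x * k' = c • (k' * x) := by
    rw [← mul_smul_comm, ← h, ← mul_assoc, ← mul_assoc, h', one_mul]
  rw [this, smul_smul, inv_mul_cancel₀ hc, one_smul]

/-- The `q`-Dolan/Grady relation for `B_i, B_j`. Unprimed letters carry the index `i`, primed ones
the index `j`, and `ki`, `ki'` are the inverses of `k`, `k'`. -/
lemma DG_of_rel {R : Type*} [Ring R] [Algebra F R] {q : F} (hq : q ≠ 0) (hq2 : q ^ 2 ≠ 1)
    {e e' f f' k k' ki ki' : R} (s s' : F)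
    (hk : ki * k = 1) (hkk : k * ki = 1) (hk' : ki' * k' = 1) (hkk' : ki * ki' = ki' * ki)
    (h1 : k * e * ki = q ^ 2 • e) (h2 : k * f * ki = q⁻¹ ^ 2 • f)
    (h3 : k * e' * ki = q⁻¹ ^ 2 • e') (h4 : k * f' * ki = q ^ 2 • f')
    (h5 : k' * e * ki' = q⁻¹ ^ 2 • e) (h6 : k' * f * ki' = q ^ 2 • f)
    (hef : e * f - f * e = (q - q⁻¹)⁻¹ • (k - ki)) (hef' : e * f' = f' * e)
    (he'f : e' * f = f * e')
    (hSe : qSerre q e e' = 0) (hSf : qSerre q f f' = 0) :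
    qSerre q (f - (q⁻¹ * (q - q⁻¹) ^ 2) • (e * ki) + s • ki)
        (f' - (q⁻¹ * (q - q⁻¹) ^ 2) • (e' * ki') + s' • ki')
      = ((q ^ 2 - q⁻¹ ^ 2) ^ 2) •
        ((f' - (q⁻¹ * (q - q⁻¹) ^ 2) • (e' * ki') + s' • ki')
            * (f - (q⁻¹ * (q - q⁻¹) ^ 2) • (e * ki) + s • ki)
          - (f - (q⁻¹ * (q - q⁻¹) ^ 2) • (e * ki) + s • ki)
            * (f' - (q⁻¹ * (q - q⁻¹) ^ 2) • (e' * ki') + s' • ki')) := by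
  have hqq : q - q⁻¹ ≠ 0 := by
    intro h0; apply hq2; field_simp at h0; linear_combination h0
  obtain ⟨γ, hγ⟩ : ∃ γ, γ = q⁻¹ * (q - q⁻¹) ^ 2 := ⟨_, rfl⟩
  have hγa : γ * (q - q⁻¹)⁻¹ * q ^ 2 = q ^ 2 - 1 := by
    rw [hγ]; field_simp
  obtain ⟨a, ha⟩ : ∃ a, a = q ^ 2 := ⟨_, rfl⟩
  have ha' : q⁻¹ ^ 2 = a⁻¹ := by rw [ha, inv_pow]
  have ha0 : a ≠ 0 := by rw [ha]; exact pow_ne_zero 2 hq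
  have hc := qSerre_coeff hq hq2 (Or.inl ha)
  rw [← hγ, ha', ← ha]
  rw [ha'] at h2 h3 h5
  rw [← ha] at h1 h4 h6 hγa
  have r1 := inv_mul_of_conj ha0 hk h1
  have r2 := inv_mul_of_conj (inv_ne_zero ha0) hk h2
  have r3 := inv_mul_of_conj (inv_ne_zero ha0) hk h3
  have r4 := inv_mul_of_conj ha0 hk h4
  have r5 := inv_mul_of_conj (inv_ne_zero ha0) hk' h5
  have r6 := inv_mul_of_conj ha0 hk' h6
  rw [inv_inv] at r2 r3 r5
  obtain ⟨p, hp⟩ : ∃ p, p = -(γ • (e * ki)) := ⟨_, rfl⟩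
  obtain ⟨p', hp'⟩ : ∃ p', p' = -(γ • (e' * ki')) := ⟨_, rfl⟩
  rw [sub_eq_add_neg f, sub_eq_add_neg f', ← hp, ← hp']
  have tp : ki * p = a⁻¹ • (p * ki) := by
    rw [hp]
    simp only [mul_neg, neg_mul, mul_smul_comm, smul_mul_assoc, mul_rule r1, mul_assoc, smul_neg]
    rw [smul_comm]
  have pf : p * f = a • (f * p) - (a - 1) • (1 - ki * ki) := by
    have hef2 : e * f = f * e + (q - q⁻¹)⁻¹ • (k - ki) := by rw [← hef]; abel
    rw [hp, ← hγa]
    simp only [mul_neg, neg_mul, mul_smul_comm, smul_mul_assoc, mul_assoc, r2, smul_neg,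
      mul_rule hef2, add_mul, sub_mul, hkk]
    module
  have pf' : p * f' = a⁻¹ • (f' * p) := by
    rw [hp]
    simp only [mul_neg, neg_mul, mul_smul_comm, smul_mul_assoc, mul_assoc, r4, smul_neg,
      mul_rule hef']
    rw [smul_comm]
  have p'f : p' * f = a⁻¹ • (f * p') := by
    rw [hp']
    simp only [mul_neg, neg_mul, mul_smul_comm, smul_mul_assoc, mul_assoc, r6, smul_neg,
      mul_rule he'f]
    rw [smul_comm]
  have tp' : ki * p' = a • (p' * ki) := by
    rw [hp']
    simp only [mul_neg, neg_mul, mul_smul_comm, smul_mul_assoc, mul_rule r3, mul_assoc, smul_neg,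
      hkk']
    rw [smul_comm]
  have t'p : ki' * p = a • (p * ki') := by
    rw [hp]
    simp only [mul_neg, neg_mul, mul_smul_comm, smul_mul_assoc, mul_rule r5, mul_assoc, smul_neg,
      hkk']
    rw [smul_comm]
  -- Moving all `ki, ki'` to the right multiplies every monomial of the Serre expression by the same
  -- power of `a`, so the relation for `e, e'` passes to `p, p'`.
  have Sp : qSerre q p p' = 0 := by
    have hS2 : e * (e * (e * e')) = (a + 1 + a⁻¹) • (e * (e * (e' * e)))
        - (a + 1 + a⁻¹) • (e * (e' * (e * e))) + e' * (e * (e * e)) := by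
      unfold qSerre at hSe
      rw [hc] at hSe
      rw [← sub_eq_zero, ← hSe]; simp only [pow_succ, pow_zero, one_mul, mul_assoc]; abel
    have hS3 : ∀ w, e * (e * (e * (e' * w))) = (a + 1 + a⁻¹) • (e * (e * (e' * (e * w))))
        - (a + 1 + a⁻¹) • (e * (e' * (e * (e * w)))) + e' * (e * (e * (e * w))) := fun w => by
      have := congrArg (· * w) hS2
      simpa only [add_mul, sub_mul, smul_mul_assoc, mul_assoc] using this
    unfold qSerre
    rw [hc, hp, hp']
    simp only [pow_succ, pow_zero, one_mul, mul_neg, neg_mul, mul_smul_comm, smul_mul_assoc,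
      mul_assoc, smul_neg, mul_rule r1, mul_rule r3, mul_rule r5, hkk',
      mul_rule hkk', hS3]
    match_scalars <;> field_simp <;> ring
  have d1 := DG_f (s := s) ha0 hc r2 tp pf r4 pf' hSf
  have d2 := DG_p (s := s) ha0 hc r2 tp pf tp' p'f Sp
  have d3 := DG_t (s := s) ha0 hc r2 tp pf r6 t'p hkk'.symm
  rw [qSerre_add_right, qSerre_add_right, qSerre_smul_right, d1, d2, d3]
  simp only [add_mul, mul_add, smul_mul_assoc, mul_smul_comm]
  module
end embedding

/-- Propositions 12.12 and 12.13 (Kolb's embedding): with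
`B_i = e_i⁻ − γ_i e_i⁺ k_i⁻¹ + s_i k_i⁻¹` and `γ_i = q⁻¹(q − q⁻¹)²`, there is an injective
algebra homomorphism `O_q → U_q(sl₂-hat)` sending `A ↦ B₀`, `B ↦ B₁`. -/
theorem stmt19 (F : Type*) [Field F] (q : F) (hq : q ≠ 0) (hq2 : q ^ 2 ≠ 1)
    (s0 s1 : F) (B0 B1 : UqAff F q)
    (hB0 : B0 = eM F q 0 - (q⁻¹ * (q - q⁻¹) ^ 2) • (eP F q 0 * kki F q 0) + s0 • kki F q 0)
    (hB1 : B1 = eM F q 1 - (q⁻¹ * (q - q⁻¹) ^ 2) • (eP F q 1 * kki F q 1) + s1 • kki F q 1) :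
    ∃ f : Onsager F q →ₐ[F] UqAff F q,
      (f (Ag F q) = B0 ∧ f (Bg F q) = B1) ∧ Function.Injective f := by
  let u := RingQuot.mkAlgHom F (UqRel F q)
  have hu : ∀ {x y}, UqRel F q x y → u x = u y := fun h => RingQuot.mkAlgHom_rel F h
  let B : Fin 2 → UqAff F q := fun i =>
    eM F q i - (q⁻¹ * (q - q⁻¹) ^ 2) • (eP F q i * kki F q i) + (![s0, s1] i) • kki F q i
  have hB0' : B 0 = B0 := hB0.symm
  have hB1' : B 1 = B1 := hB1.symm
  have hDG : ∀ i j, i ≠ j → qSerre q (B i) (B j)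
      = ((q ^ 2 - q⁻¹ ^ 2) ^ 2) • (B j * B i - B i * B j) := by
    intro i j h
    have eM' : ∀ i, u (uFm F i) = eM F q i := fun _ => rfl
    have eP' : ∀ i, u (uE F i) = eP F q i := fun _ => rfl
    have kk' : ∀ i, u (uK F i) = kk F q i := fun _ => rfl
    have kki' : ∀ i, u (uKi F i) = kki F q i := fun _ => rfl
    have x1 : ∀ i, kk F q i * kki F q i = 1 := fun i => by
      simpa only [map_mul, map_one, kk', kki'] using hu (UqRel.k_ki i)
    have x2 : ∀ i, kki F q i * kk F q i = 1 := fun i => by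
      simpa only [map_mul, map_one, kk', kki'] using hu (UqRel.ki_k i)
    have x3 : kk F q 0 * kk F q 1 = kk F q 1 * kk F q 0 := by
      simpa only [map_mul, kk'] using hu UqRel.k_comm
    have x4 : kk F q i * kk F q j = kk F q j * kk F q i := by
      fin_cases i <;> fin_cases j <;> first | rfl | exact x3 | exact x3.symm
    have x5 : kki F q i * kki F q j = kki F q j * kki F q i := by
      have : kki F q i * kki F q j * (kk F q j * kk F q i) = 1 := by
        rw [mul_assoc, ← mul_assoc (kki F q j), x2, one_mul, x2]
      calc kki F q i * kki F q j
          = kki F q i * kki F q j * (kk F q j * kk F q i) * (kki F q j * kki F q i) := by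
            rw [← x4, mul_assoc _ (kk F q i * kk F q j), mul_assoc (kk F q i),
              ← mul_assoc (kk F q j), x1, one_mul, x1, mul_one]
        _ = _ := by rw [this, one_mul]
    refine DG_of_rel hq hq2 _ _ (x2 i) (x1 i) (x2 j) x5 ?_ ?_ ?_ ?_ ?_ ?_ ?_ ?_ ?_ ?_ ?_
    · simpa only [map_mul, map_smul, kk', kki', eP'] using hu (UqRel.k_ep i)
    · simpa only [map_mul, map_smul, kk', kki', eM'] using hu (UqRel.k_em i)
    · simpa only [map_mul, map_smul, kk', kki', eP'] using hu (UqRel.k_ep' i j h)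
    · simpa only [map_mul, map_smul, kk', kki', eM'] using hu (UqRel.k_em' i j h)
    · simpa only [map_mul, map_smul, kk', kki', eP'] using hu (UqRel.k_ep' j i h.symm)
    · simpa only [map_mul, map_smul, kk', kki', eM'] using hu (UqRel.k_em' j i h.symm)
    · simpa only [map_mul, map_sub, map_smul, kk', kki', eP', eM'] using hu (UqRel.e_comm i)
    · have y1 : eP F q 0 * eM F q 1 = eM F q 1 * eP F q 0 := by
        simpa only [map_mul, eP', eM'] using hu UqRel.ep_em
      have y2 : eM F q 0 * eP F q 1 = eP F q 1 * eM F q 0 := by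
        simpa only [map_mul, eP', eM'] using hu UqRel.em_ep
      fin_cases i <;> fin_cases j <;>
        first | exact absurd rfl h | exact y1 | exact y2.symm
    · have y1 : eP F q 0 * eM F q 1 = eM F q 1 * eP F q 0 := by
        simpa only [map_mul, eP', eM'] using hu UqRel.ep_em
      have y2 : eM F q 0 * eP F q 1 = eP F q 1 * eM F q 0 := by
        simpa only [map_mul, eP', eM'] using hu UqRel.em_ep
      fin_cases i <;> fin_cases j <;>
        first | exact absurd rfl h | exact y1 | exact y2.symm
    · exact (map_qSerre u q _ _).symm.trans ((hu (UqRel.serre_p i j h)).trans (map_zero u))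
    · exact (map_qSerre u q _ _).symm.trans ((hu (UqRel.serre_m i j h)).trans (map_zero u))
  have hO : ∀ ⦃x y⦄, OnsagerRel F q x y → FreeAlgebra.lift F B x = FreeAlgebra.lift F B y := by
    intro x y hxy
    cases hxy with
    | DG1 =>
      refine (map_qSerre (FreeAlgebra.lift F B) q _ _).trans ?_
      simp only [map_smul, map_sub, map_mul, FreeAlgebra.lift_ι_apply]
      exact hDG 0 1 (by decide)
    | DG2 =>
      refine (map_qSerre (FreeAlgebra.lift F B) q _ _).trans ?_
      simp only [map_smul, map_sub, map_mul, FreeAlgebra.lift_ι_apply]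
      exact hDG 1 0 (by decide)
  let f : Onsager F q →ₐ[F] UqAff F q := RingQuot.liftAlgHom F ⟨FreeAlgebra.lift F B, hO⟩
  let ρ : FreeAlgebra F (Fin 2) →ₐ[F] Onsager F q := RingQuot.mkAlgHom F (OnsagerRel F q)
  have hf : ∀ j, f (ρ (fg F j)) = B j := fun j =>
    (RingQuot.liftAlgHom_mkAlgHom_apply F _ _ _).trans (FreeAlgebra.lift_ι_apply _ _)
  -- For injectivity, `a` with `f a = 0` acts by zero on the Verma-type module.
  refine ⟨f, ⟨(hf 0).trans hB0', (hf 1).trans hB1'⟩, ?_⟩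
  obtain ⟨Ψ, κ, c, c', hL, hk1, hki1, he1, hk, hki, he⟩ := exists_rep (F := F) hq hq2
  have hρ : ∀ i j, i ≠ j → qSerre q (ρ (fg F i)) (ρ (fg F j)) ∈ VV F (ρ ∘ fg F) ^ 3 := by
    have hmem : ∀ i j, ρ (fg F i) * ρ (fg F j) ∈ VV F (ρ ∘ fg F) ^ 3 := fun i j => by
      refine VV_pow_mono (show 2 ≤ 3 by decide) ?_
      change _ ∈ VV F (ρ ∘ fg F) ^ 2
      rw [pow_two]
      exact Submodule.mul_mem_mul (gen_mem_VV (y := ρ ∘ fg F) i) (gen_mem_VV (y := ρ ∘ fg F) j)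
    have hmem2 : ∀ i j (r : F), ρ (r • (fg F i * fg F j - fg F j * fg F i))
        ∈ VV F (ρ ∘ fg F) ^ 3 := fun i j r => by
      rw [map_smul, map_sub, map_mul, map_mul]
      exact Submodule.smul_mem _ _ (Submodule.sub_mem _ (hmem _ _) (hmem _ _))
    intro i j h
    rw [← map_qSerre]
    have h01 : (i = 0 ∧ j = 1) ∨ (i = 1 ∧ j = 0) := by omega
    rcases h01 with ⟨rfl, rfl⟩ | ⟨rfl, rfl⟩
    · exact (RingQuot.mkAlgHom_rel F (OnsagerRel.DG1 (F := F) (q := q))) ▸ hmem2 1 0 _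
    · exact (RingQuot.mkAlgHom_rel F (OnsagerRel.DG2 (F := F) (q := q))) ▸ hmem2 0 1 _
  have hone : (1 : SerreAlg F q) ∈ VV F (xg F q) ^ 0 := by
    rw [pow_zero]; exact Submodule.one_le.mp le_rfl
  have pk : ∀ i n, ∀ w ∈ VV F (xg F q) ^ n, Ψ (kk F q i) w ∈ VV F (xg F q) ^ n := fun i =>
    pres_of_comm (fun _ => 0) (c i) (by rw [hk1]; exact hone)
      (fun _ _ _ _ => Submodule.zero_mem _)
      (fun j w => by
        rw [LinearMap.zero_apply, add_zero]; exact LinearMap.congr_fun (hk i j) w)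
  have pki : ∀ i n, ∀ w ∈ VV F (xg F q) ^ n, Ψ (kki F q i) w ∈ VV F (xg F q) ^ n := fun i =>
    pres_of_comm (fun _ => 0) (c' i) (by rw [hki1]; exact hone)
      (fun _ _ _ _ => Submodule.zero_mem _)
      (fun j w => by
        rw [LinearMap.zero_apply, add_zero]; exact LinearMap.congr_fun (hki i j) w)
  have pe : ∀ i n, ∀ w ∈ VV F (xg F q) ^ n, Ψ (eP F q i) w ∈ VV F (xg F q) ^ n := fun i =>
    pres_of_comm (fun j => if j = i then κ • (Ψ (kk F q i) - Ψ (kki F q i)) else 0) (fun _ => 1)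
      (by rw [he1]; exact Submodule.zero_mem _)
      (fun j n w hw => by
        split_ifs
        · exact Submodule.smul_mem _ _ (Submodule.sub_mem _ (pk i n w hw) (pki i n w hw))
        · exact Submodule.zero_mem _)
      (fun j w => by rw [one_smul]; exact LinearMap.congr_fun (he i j) w)
  rw [injective_iff_map_eq_zero]
  intro a ha
  refine injective_of_rep (q := q) ρ (RingQuot.mkAlgHom_surjective F _) hρ (Ψ.comp f)
    (fun i => -((q⁻¹ * (q - q⁻¹) ^ 2) • (Ψ (eP F q i) * Ψ (kki F q i)))
      + (![s0, s1] i) • Ψ (kki F q i)) ?_ ?_ a ?_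
  · intro j
    rw [AlgHom.comp_apply, hf]
    simp only [B]
    rw [map_add, map_sub, map_smul, map_smul, map_mul, hL, sub_eq_add_neg, add_assoc]
  · intro j n w hw
    exact Submodule.add_mem _ (Submodule.neg_mem _ (Submodule.smul_mem _ _
      (pe j n _ (pki j n w hw)))) (Submodule.smul_mem _ _ (pki j n w hw))
  · rw [AlgHom.comp_apply, ha, map_zero]; rfl
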